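/- arXiv:cs/0110010 — 6 statements merged into one kernel-verified Lean document; each statement's English description precedes it below -/
import Mathlib

section
/- For every clock valuation v, every δ ≥ 0, and every i ∈ K⁺, the fractional part of clock x_i in the relative representation is unchanged by a synchronous clock progress: fract(rel(v+δ))(i) = fract(rel(v))(i), where v+δ denotes the valuation j ↦ v(j)+δ. -/
open scoped BigOperators

namespace PTApaper

/-! ## Clock valuations -/

/-- A (raw) clock valuation on clocks `x_0, …, x_k`. -/
abbrev Val (k : ℕ) := Fin (k+1) → ℝ

/-- A discrete clock valuation. -/
abbrev DVal (k : ℕ) := Fin (k+1) → ℕ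

/-- A clock valuation takes nonnegative values. -/
def IsVal {k : ℕ} (v : Val k) : Prop := ∀ i, 0 ≤ v i

/-- A valuation is initial if the auxiliary clock `x_0` has value 0. -/
def Initial {k : ℕ} (v : Val k) : Prop := v 0 = 0

/-- The integral part `int(v)` of a valuation. -/
noncomputable def intPart {k : ℕ} (v : Val k) : DVal k := fun i => (⌊v i⌋).toNat

/-- The fractional parts of the relative representation `rel(v)`:
`fract(rel(v))(0) = fract (1 - fract (v 0))` and
`fract(rel(v))(i) = fract (fract (v i) + fract(rel(v))(0))` for `i ∈ K⁺`. -/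
noncomputable def relFract {k : ℕ} (v : Val k) : Fin (k+1) → ℝ := fun i =>
  if i = 0 then Int.fract (1 - Int.fract (v 0))
  else Int.fract (Int.fract (v i) + Int.fract (1 - Int.fract (v 0)))

/-- Synchronous clock progress `v + δ`. -/
def shift {k : ℕ} (v : Val k) (δ : ℝ) : Val k := fun i => v i + δ

/-- Clock reset `v↓_r`. -/
def resetVal {k : ℕ} (r : Finset (Fin (k+1))) (v : Val k) : Val k :=
  fun i => if i ∈ r then 0 else v i

/-! ## Patterns -/

/-- A raw pattern: a finite sequence of subsets of `K⁰ ∪ K¹`, where the index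
`(i, false)` stands for `i⁰` and `(i, true)` stands for `i¹`. -/
abbrev PatSeq (k : ℕ) := List (Finset (Fin (k+1) × Bool))

/-- The well-formedness conditions making `η = p₀,…,p_n` a pattern:
`0 ≤ n < 2(k+1)`, the `p_m` are nonempty and pairwise disjoint, `0⁰ ∈ p₀`,
and `p₀ ∪ … ∪ p_n = K⁰ ∪ K¹`. -/
def IsPattern {k : ℕ} (η : PatSeq k) : Prop :=
  η.length ≤ 2*(k+1) ∧
  (∀ p ∈ η, p.Nonempty) ∧
  η.Pairwise Disjoint ∧
  ((0 : Fin (k+1)), false) ∈ η.getD 0 ∅ ∧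
  (∀ x : Fin (k+1) × Bool, ∃ p ∈ η, x ∈ p)

/-- `bval v₀ v₁ b` is `v_b`. -/
def bval {k : ℕ} (v₀ v₁ : Val k) : Bool → Val k
  | false => v₀
  | true => v₁

/-- The defining ordering condition for "`(v₀,v₁)` has pattern `η = p₀,…,p_n`":
for all positions `m, m'`, copies `b, b'` and clocks `i, i'` with `i^b ∈ p_m` and
`i'^{b'} ∈ p_{m'}`, `fract(rel(v_b))(i) = fract(rel(v_{b'}))(i')` iff `m = m'`, and
`fract(rel(v_b))(i) < fract(rel(v_{b'}))(i')` iff `m < m'`. -/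
def HasPatternOrd {k : ℕ} (v₀ v₁ : Val k) (η : PatSeq k) : Prop :=
  ∀ m m' : Fin η.length, ∀ b b' : Bool, ∀ i i' : Fin (k+1),
    (i, b) ∈ η.get m → (i', b') ∈ η.get m' →
      ((relFract (bval v₀ v₁ b) i = relFract (bval v₀ v₁ b') i' ↔ m = m') ∧
       (relFract (bval v₀ v₁ b) i < relFract (bval v₀ v₁ b') i' ↔ (m : ℕ) < (m' : ℕ)))

/-- `(v₀,v₁)` has pattern `η` (written `[(v₀,v₁)] = η`). -/
def PatternOf {k : ℕ} (v₀ v₁ : Val k) (η : PatSeq k) : Prop :=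
  IsPattern η ∧ HasPatternOrd v₀ v₁ η

/-- A pattern is initial if it is the pattern of `(v₀,v₀)` for some initial valuation `v₀`. -/
def InitialPattern {k : ℕ} (η : PatSeq k) : Prop :=
  ∃ v₀ : Val k, IsVal v₀ ∧ Initial v₀ ∧ PatternOf v₀ v₀ η

/-- The equivalence `(v₀¹,v₁) ≈ (v₀²,v₂)`: same pattern and same integral parts. -/
def PairEquiv {k : ℕ} (va vb vc vd : Val k) : Prop :=
  (∃ η : PatSeq k, PatternOf va vb η ∧ PatternOf vc vd η) ∧
  intPart va = intPart vc ∧ intPart vb = intPart vd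

/-! ## now-position, Next, next, reset -/

/-- The index of the now-position, i.e. the position containing `0¹`. -/
def nowIdx {k : ℕ} (η : PatSeq k) : ℕ :=
  η.findIdx fun p => decide (((0 : Fin (k+1)), true) ∈ p)

/-- A merge-pattern: the now-position is the singleton `{0¹}`. -/
def IsMergePat {k : ℕ} (η : PatSeq k) : Prop :=
  η.getD (nowIdx η) ∅ = ({((0 : Fin (k+1)), true)} : Finset (Fin (k+1) × Bool))

/-- A split-pattern: a pattern that is not a merge-pattern. -/
def IsSplitPat {k : ℕ} (η : PatSeq k) : Prop := ¬ IsMergePat η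

/-- The next pattern `Next(η)`. -/
def NextPat {k : ℕ} (η : PatSeq k) : PatSeq k :=
  let i := nowIdx η
  if η.getD i ∅ = ({((0 : Fin (k+1)), true)} : Finset (Fin (k+1) × Bool)) then
    -- merge case : `p₀, …, p_{i-1} ∪ {0¹}, p_{i+1}, …, p_n`
    η.take (i-1) ++ [η.getD (i-1) ∅ ∪ {((0 : Fin (k+1)), true)}] ++ η.drop (i+1)
  else if i = 0 then
    -- split case with `i = 0` : `p₀ ∖ {0¹}, p₁, …, p_n, {0¹}`
    (η.getD 0 ∅ \ {((0 : Fin (k+1)), true)}) :: (η.drop 1 ++ [{((0 : Fin (k+1)), true)}])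
  else
    -- split case with `i > 0` : `p₀, …, p_{i-1}, {0¹}, p_i ∖ {0¹}, p_{i+1}, …, p_n`
    η.take i ++ [{((0 : Fin (k+1)), true)}, η.getD i ∅ \ {((0 : Fin (k+1)), true)}]
      ++ η.drop (i+1)

/-- The counter update of `next(η,u)`. -/
def nextD {k : ℕ} (η : PatSeq k) (u : DVal k) : DVal k :=
  let i := nowIdx η
  if η.getD i ∅ = ({((0 : Fin (k+1)), true)} : Finset (Fin (k+1) × Bool)) then
    fun j =>
      if j = 0 then (if i = 1 then u 0 + 1 else u 0)
      else (if (j, true) ∈ η.getD (i-1) ∅ then u j + 1 else u j)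
  else u

/-- `next(η,u)`. -/
def nextPair {k : ℕ} (η : PatSeq k) (u : DVal k) : PatSeq k × DVal k :=
  (NextPat η, nextD η u)

/-- The pattern part of `reset_r(η,u)`: all indices `j¹`, `j ∈ r`, are moved into the
now-position, and entries that become empty are deleted. -/
def ResetPat {k : ℕ} (r : Finset (Fin (k+1))) (η : PatSeq k) : PatSeq k :=
  let r1 : Finset (Fin (k+1) × Bool) := r.image (fun j => (j, true))
  let i := nowIdx η
  (η.mapIdx (fun m p => if m = i then p ∪ r1 else p \ r1)).filter (fun p => decide (p ≠ ∅))

/-- The counter update of `reset_r(η,u)`. -/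
def resetD {k : ℕ} (r : Finset (Fin (k+1))) (u : DVal k) : DVal k :=
  fun j => if j ∈ r then 0 else u j

/-- `reset_r(η,u)`. -/
def resetPair {k : ℕ} (r : Finset (Fin (k+1))) (η : PatSeq k) (u : DVal k) :
    PatSeq k × DVal k :=
  (ResetPat r η, resetD r u)

/-! ## Pattern changes -/

/-- `v` has no pattern change for `δ`. -/
def NoChange {k : ℕ} (v₀ v : Val k) (δ : ℝ) : Prop :=
  ∃ η : PatSeq k, PatternOf v₀ v η ∧
    ∀ δ', 0 ≤ δ' → δ' ≤ δ → PatternOf v₀ (shift v δ') η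

/-- `v` has one pattern change for `δ`. -/
def OneChange {k : ℕ} (v₀ v : Val k) (δ : ℝ) : Prop :=
  ∃ η η' : PatSeq k, PatternOf v₀ v η ∧ PatternOf v₀ (shift v δ) η' ∧
    NextPat η = η' ∧
    ((∀ δ', 0 < δ' → δ' < δ → PatternOf v₀ (shift v δ') η) ∨
     (∀ δ', 0 < δ' → δ' < δ → PatternOf v₀ (shift v δ') η'))

/-- `v` has `n` pattern changes for `δ` (for `n ≥ 1`): `δ = δ₁ + … + δ_n` with each
`δ_j > 0` and `v + δ₁ + … + δ_j` has one pattern change for `δ_{j+1}`. -/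
def NChanges {k : ℕ} (v₀ v : Val k) (n : ℕ) (δ : ℝ) : Prop :=
  ∃ d : ℕ → ℝ, (∀ j < n, 0 < d j) ∧ (∑ j ∈ Finset.range n, d j) = δ ∧
    ∀ j < n, OneChange v₀ (shift v (∑ j' ∈ Finset.range j, d j')) (d j)

/-! ## Clock constraints -/

/-- Comparison operators `<, ≤, =, ≥, >`. -/
inductive CCmp | lt | le | eq | ge | gt

/-- Evaluation of a comparison operator on reals. -/
def CCmp.evalR : CCmp → ℝ → ℝ → Prop
  | .lt, a, b => a < b
  | .le, a, b => a ≤ b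
  | .eq, a, b => a = b
  | .ge, a, b => a ≥ b
  | .gt, a, b => a > b

/-- Clock constraints over the clocks `x_1, …, x_k` (indexed by `Fin k`, clock
`x_{i+1}` for `i : Fin k`): Boolean combinations of `x_i - x_j # d` and `x_i # d`. -/
inductive CC (k : ℕ)
  | diff (i j : Fin k) (op : CCmp) (d : ℕ) : CC k
  | single (i : Fin k) (op : CCmp) (d : ℕ) : CC k
  | not (c : CC k) : CC k
  | and (c₁ c₂ : CC k) : CC k

/-- `v ∈ c` : the valuation `v` satisfies the clock constraint `c`. -/
def CC.sat {k : ℕ} (v : Val k) : CC k → Prop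
  | .diff i j op d => op.evalR (v i.succ - v j.succ) (d : ℝ)
  | .single i op d => op.evalR (v i.succ) (d : ℝ)
  | .not c => ¬ c.sat v
  | .and c₁ c₂ => c₁.sat v ∧ c₂.sat v

/-- The position (in `η`) of an index `x ∈ K⁰ ∪ K¹`. -/
def posOf {k : ℕ} (η : PatSeq k) (x : Fin (k+1) × Bool) : ℕ :=
  η.findIdx fun p => decide (x ∈ p)

/-- The truth value, given by pattern `η`, of the fractional ordering
`fract(x_a) > fract(x_b)`. -/
def fracGtP {k : ℕ} (η : PatSeq k) (a b : Fin (k+1)) : Prop :=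
  let i := posOf η ((0 : Fin (k+1)), true)
  let m₁ := posOf η (a, true)
  let m₂ := posOf η (b, true)
  (m₁ < i ∧ i ≤ m₂) ∨ (m₂ < m₁ ∧ m₁ < i) ∨ (i ≤ m₂ ∧ m₂ < m₁)

/-- The truth value, given by pattern `η`, of `fract(x_a) = fract(x_b)`. -/
def fracEqP {k : ℕ} (η : PatSeq k) (a b : Fin (k+1)) : Prop :=
  posOf η (a, true) = posOf η (b, true)

/-- The truth value, given by pattern `η`, of `fract(x_a) = 0`. -/
def fracZeroP {k : ℕ} (η : PatSeq k) (a : Fin (k+1)) : Prop :=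
  posOf η (a, true) = posOf η ((0 : Fin (k+1)), true)

/-- `u ∈ c^η` : the discrete valuation `u` satisfies the constraint `c^η`, obtained by
rewriting `c` as `I(c)` over integral parts and fractional orderings and substituting the
truth values of the fractional orderings determined by the pattern `η`. -/
def CC.satP {k : ℕ} (η : PatSeq k) (u : DVal k) : CC k → Prop
  | .diff i j op d =>
      let I : ℤ := (u i.succ : ℤ) - (u j.succ : ℤ)
      (match op with
      | .lt => I < d ∨ (I = d ∧ fracGtP η j.succ i.succ)
      | .le => I < d ∨ (I = d ∧ (fracGtP η j.succ i.succ ∨ fracEqP η i.succ j.succ))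
      | .eq => I = d ∧ fracEqP η i.succ j.succ
      | .ge => I > d ∨ (I = d ∧ (fracGtP η i.succ j.succ ∨ fracEqP η i.succ j.succ))
      | .gt => I > d ∨ (I = d ∧ fracGtP η i.succ j.succ))
  | .single i op d =>
      let I : ℤ := (u i.succ : ℤ)
      (match op with
      | .lt => I < d
      | .le => I < d ∨ (I = d ∧ fracZeroP η i.succ)
      | .eq => I = d ∧ fracZeroP η i.succ
      | .ge => I ≥ d
      | .gt => I > d ∨ (I = d ∧ ¬ fracZeroP η i.succ))
  | .not c => ¬ c.satP η u
  | .and c₁ c₂ => c₁.satP η u ∧ c₂.satP η u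

/-! ## Pushdown timed automata -/

/-- A pushdown timed automaton `⟨S, {x₁,…,x_k}, Inv, R, Γ, PD⟩`:
`Inv` assigns an invariant to each state, `R s s' = (Rc s s', Rr s s')` assigns a reset
condition and a set of clock resets (a subset of `K⁺`) to each edge, and
`PD s s' = (PDa s s', PDw s s')` assigns a stack operation to each edge. -/
structure PTA (k : ℕ) (S : Type) (Γ : Type) where
  Inv : S → CC k
  Rc : S → S → CC k
  Rr : S → S → Finset (Fin (k+1))
  hRr : ∀ s s', (0 : Fin (k+1)) ∉ Rr s s'
  PDa : S → S → Γ
  PDw : S → S → List Γ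

/-- A configuration `(s, v, w)` of a PTA. -/
abbrev Config (k : ℕ) (S Γ : Type) := S × Val k × List Γ

/-- The one-step transition relation `→_A` of a PTA. -/
def Step {k : ℕ} {S Γ : Type} (A : PTA k S Γ) (c₁ c₂ : Config k S Γ) : Prop :=
  -- progress transition
  (c₁.1 = c₂.1 ∧ c₁.2.2 = c₂.2.2 ∧
    ∃ δ : ℝ, 0 < δ ∧ c₂.2.1 = shift c₁.2.1 δ ∧
      ∀ δ', 0 ≤ δ' → δ' ≤ δ → (A.Inv c₁.1).sat (shift c₁.2.1 δ')) ∨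
  -- reset transition
  ((A.Inv c₁.1).sat c₁.2.1 ∧ (A.Rc c₁.1 c₂.1).sat c₁.2.1 ∧
    c₂.2.1 = resetVal (A.Rr c₁.1 c₂.1) c₁.2.1 ∧ (A.Inv c₂.1).sat c₂.2.1 ∧
    ∃ w : List Γ, c₁.2.2 = A.PDa c₁.1 c₂.1 :: w ∧ c₂.2.2 = A.PDw c₁.1 c₂.1 ++ w)

/-- `→*_A`, the transitive closure of `→_A`. -/
def Reach {k : ℕ} {S Γ : Type} (A : PTA k S Γ) : Config k S Γ → Config k S Γ → Prop :=
  Relation.TransGen (Step A)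

/-- `(s₀,u₀,w₀) →*_{A,η} (s₁,u₁,w₁)`. -/
def ReachPat {k : ℕ} {S Γ : Type} (A : PTA k S Γ) (η : PatSeq k)
    (s₀ : S) (u₀ : DVal k) (w₀ : List Γ) (s₁ : S) (u₁ : DVal k) (w₁ : List Γ) : Prop :=
  ∃ v₀ v₁ : Val k, IsVal v₀ ∧ IsVal v₁ ∧ v₀ 0 = 0 ∧
    intPart v₀ = u₀ ∧ intPart v₁ = u₁ ∧ PatternOf v₀ v₁ η ∧
    Reach A (s₀, v₀, w₀) (s₁, v₁, w₁)

/-! ## The pattern graph -/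

/-- A configuration `(s, η, u, w)` of the pattern graph. -/
abbrev GConfig (k : ℕ) (S Γ : Type) := S × PatSeq k × DVal k × List Γ

/-- The one-step transition relation `→_G` of the pattern graph `G` of a PTA `A`,
through progress edges, stay edges and reset edges. -/
def GStep {k : ℕ} {S Γ : Type} (A : PTA k S Γ) (c₁ c₂ : GConfig k S Γ) : Prop :=
  -- progress edge
  (c₁.1 = c₂.1 ∧ c₁.2.2.2 = c₂.2.2.2 ∧
    nextPair c₁.2.1 c₁.2.2.1 = (c₂.2.1, c₂.2.2.1) ∧
    (A.Inv c₁.1).satP c₁.2.1 c₁.2.2.1 ∧ (A.Inv c₁.1).satP c₂.2.1 c₂.2.2.1) ∨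
  -- stay edge
  (c₁ = c₂ ∧ IsMergePat c₁.2.1 ∧ (A.Inv c₁.1).satP c₁.2.1 c₁.2.2.1) ∨
  -- reset edge
  (resetPair (A.Rr c₁.1 c₂.1) c₁.2.1 c₁.2.2.1 = (c₂.2.1, c₂.2.2.1) ∧
    ((A.Rc c₁.1 c₂.1).and (A.Inv c₁.1)).satP c₁.2.1 c₁.2.2.1 ∧
    (A.Inv c₂.1).satP c₂.2.1 c₂.2.2.1 ∧
    ∃ w : List Γ, c₁.2.2.2 = A.PDa c₁.1 c₂.1 :: w ∧ c₂.2.2.2 = A.PDw c₁.1 c₂.1 ++ w)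

/-- `→*_G`, the transitive closure of `→_G`. -/
def GReach {k : ℕ} {S Γ : Type} (A : PTA k S Γ) : GConfig k S Γ → GConfig k S Γ → Prop :=
  Relation.TransGen (GStep A)

end PTApaper
namespace PTApaper

/-- Key fact: the relative fractional part is the fractional part of the difference. -/
theorem fract_rel_aux (a b : ℝ) :
    Int.fract (Int.fract a + Int.fract (1 - Int.fract b)) = Int.fract (a - b) := by
  rw [Int.fract_eq_fract]
  refine ⟨-⌊a⌋ + 1 + ⌊b⌋ - ⌊1 - Int.fract b⌋, ?_⟩
  have h1 := Int.self_sub_floor a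
  have h2 := Int.self_sub_floor b
  have h3 := Int.self_sub_floor (1 - Int.fract b)
  push_cast
  linarith

/-- For every clock valuation `v`, every `δ ≥ 0` and every `i ∈ K⁺`,
the fractional part of clock `x_i` in the relative representation is unchanged by a
synchronous clock progress: `fract(rel(v+δ))(i) = fract(rel(v))(i)`. -/
theorem relFract_shift (k : ℕ) (hk : 1 ≤ k) (v : Val k) (hv : IsVal v)
    (δ : ℝ) (hδ : 0 ≤ δ) (i : Fin (k+1)) (hi : i ≠ 0) :
    relFract (shift v δ) i = relFract v i := by
  simp only [relFract, if_neg hi, fract_rel_aux, shift, add_sub_add_right_eq_sub]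

end PTApaper
end

section
/- Let (v₀¹,v₁) and (v₀²,v₂) be initialized pairs with (v₀¹,v₁) ≈ (v₀²,v₂). Then: (1) the pattern of (v₀¹,v₁) is initial iff fract(v₁) = fract(v₀¹); (2) v₁ is initial (v₁(0) = 0) iff v₂ is initial; (3) v₁ = v₀¹ iff v₂ = v₀². -/
open scoped BigOperators

namespace PTApaper

theorem aux_transfer {k : ℕ} {v w v' w' : Val k} {η : PatSeq k}
    (h : PatternOf v w η) (h' : PatternOf v' w' η) (b b' : Bool) (i i' : Fin (k+1))
    (e : relFract (bval v w b) i = relFract (bval v w b') i') :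
    relFract (bval v' w' b) i = relFract (bval v' w' b') i' := by
  obtain ⟨⟨_, _, _, _, hc⟩, ho⟩ := h
  obtain ⟨p, hp, hx⟩ := hc (i, b)
  obtain ⟨q, hq, hy⟩ := hc (i', b')
  obtain ⟨m, rfl⟩ := List.get_of_mem hp
  obtain ⟨n, rfl⟩ := List.get_of_mem hq
  have := (ho m n b b' i i' hx hy).1.1 e
  exact (h'.2 m n b b' i i' hx hy).1.2 this

theorem aux_zero {k : ℕ} (w : Val k) : relFract w 0 = 0 ↔ Int.fract (w 0) = 0 := by
  have h1 := Int.fract_nonneg (w 0)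
  have h2 := Int.fract_lt_one (w 0)
  simp only [relFract, if_true]
  constructor
  · intro h
    by_contra hne
    have hpos : 0 < Int.fract (w 0) := lt_of_le_of_ne h1 (Ne.symm hne)
    have : Int.fract (1 - Int.fract (w 0)) = 1 - Int.fract (w 0) :=
      Int.fract_eq_self.2 ⟨by linarith, by linarith⟩
    linarith
  · intro h
    rw [h]; simp

theorem aux_rel {k : ℕ} {w : Val k} (h : Int.fract (w 0) = 0) (i : Fin (k+1)) :
    relFract w i = Int.fract (w i) := by
  by_cases hi : i = 0
  · subst hi
    rw [h]; exact (aux_zero w).2 h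
  · simp [relFract, hi, h]

theorem aux_init {k : ℕ} {v : Val k} (h : Initial v) : Int.fract (v 0) = 0 := by
  unfold Initial at h
  rw [h]; simp

theorem aux_iff {k : ℕ} {v w : Val k} (h : Initial v) :
    (∀ i, relFract w i = relFract v i) ↔ ∀ i, Int.fract (w i) = Int.fract (v i) := by
  have hv := aux_init h
  constructor
  · intro e i
    have hw : Int.fract (w 0) = 0 := by
      rw [← aux_zero, e 0, aux_zero]; exact hv
    rw [← aux_rel hw, ← aux_rel hv, e]
  · intro e i
    have hw : Int.fract (w 0) = 0 := by rw [e 0, hv]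
    rw [aux_rel hw, aux_rel hv, e]

theorem aux_ext {x y : ℝ} (hx : 0 ≤ x) (hy : 0 ≤ y) (hi : ⌊x⌋.toNat = ⌊y⌋.toNat)
    (hf : Int.fract x = Int.fract y) : x = y := by
  have h1 := Int.floor_nonneg.2 hx
  have h2 := Int.floor_nonneg.2 hy
  have h3 : ⌊x⌋ = ⌊y⌋ := by omega
  rw [← Int.floor_add_fract x, ← Int.floor_add_fract y, h3, hf]

theorem aux_initial {k : ℕ} {va vb vc vd : Val k} (hvb : IsVal vb) (hvd : IsVal vd)
    (h0a : Initial va) (h0c : Initial vc)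
    (heq : PairEquiv va vb vc vd) (h : Initial vb) : Initial vd := by
  obtain ⟨⟨η, h1, h2⟩, -, hb⟩ := heq
  have e := aux_transfer h1 h2 true false 0 0 (by
    show relFract vb 0 = relFract va 0
    rw [(aux_zero vb).2 (aux_init h), (aux_zero va).2 (aux_init h0a)])
  change relFract vd 0 = relFract vc 0 at e
  rw [(aux_zero vc).2 (aux_init h0c), aux_zero] at e
  have hb0 := congrFun hb 0
  have : vd 0 = vb 0 := aux_ext (hvd 0) (hvb 0) hb0.symm (by rw [e, aux_init h])
  unfold Initial at *
  rw [this, h]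

theorem aux_eq {k : ℕ} {va vb vc vd : Val k} (hvc : IsVal vc) (hvd : IsVal vd)
    (h0c : Initial vc)
    (heq : PairEquiv va vb vc vd) (h : vb = va) : vd = vc := by
  obtain ⟨⟨η, h1, h2⟩, ha, hb⟩ := heq
  subst h
  have e : ∀ i, relFract vd i = relFract vc i := fun i =>
    aux_transfer h1 h2 true false i i rfl
  funext i
  exact aux_ext (hvd i) (hvc i) (congrFun (hb.symm.trans ha) i) ((aux_iff h0c).1 e i)

theorem aux_symm {k : ℕ} {va vb vc vd : Val k} (h : PairEquiv va vb vc vd) :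
    PairEquiv vc vd va vb := by
  obtain ⟨⟨η, h1, h2⟩, ha, hb⟩ := h
  exact ⟨⟨η, h2, h1⟩, ha.symm, hb.symm⟩

/-- Lemma `initialpattern`. Let `(va,vb)` and `(vc,vd)` be initialized
pairs with `(va,vb) ≈ (vc,vd)`. Then (1) the pattern of `(va,vb)` is initial iff
`fract(vb) = fract(va)`; (2) `vb` is initial iff `vd` is initial; (3) `vb = va` iff
`vd = vc`. -/
theorem initial_pattern_lemma (k : ℕ) (hk : 1 ≤ k) (va vb vc vd : Val k)
    (hva : IsVal va) (hvb : IsVal vb) (hvc : IsVal vc) (hvd : IsVal vd)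
    (h0a : Initial va) (h0c : Initial vc)
    (heq : PairEquiv va vb vc vd) :
    (∀ η : PatSeq k, PatternOf va vb η →
      (InitialPattern η ↔ ∀ i, Int.fract (vb i) = Int.fract (va i))) ∧
    (Initial vb ↔ Initial vd) ∧
    (vb = va ↔ vd = vc) := by
  refine ⟨?_, ⟨aux_initial hvb hvd h0a h0c heq, aux_initial hvd hvb h0c h0a (aux_symm heq)⟩,
    ⟨aux_eq hvc hvd h0c heq, aux_eq hva hvb h0a (aux_symm heq)⟩⟩
  intro η hη
  rw [← aux_iff h0a]
  constructor
  · rintro ⟨u, -, -, hu⟩ i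
    exact aux_transfer hu hη true false i i rfl
  · intro e
    refine ⟨va, hva, h0a, hη.1, ?_⟩
    have e' : ∀ b i, relFract (bval va va b) i = relFract (bval va vb b) i := by
      intro b i
      cases b
      · rfl
      · exact (e i).symm
    intro m m' b b' i i' hm hm'
    rw [e', e']
    exact hη.2 m m' b b' i i' hm hm'

end PTApaper
end

section
/- Let η = p₀,…,p_n be a pattern of a valuation v, and assume 0¹ ∈ p_i for some 0 ≤ i ≤ n. Then for all m₁, m₂ with 0 ≤ m₁,m₂ ≤ n and all j₁, j₂ ∈ K⁺ with j₁¹ ∈ p_{m₁} and j₂¹ ∈ p_{m₂}: (1) fract(v)(j₁) > fract(v)(j₂) iff one of the following holds: m₁ < i ≤ m₂, or m₂ < m₁ < i, or i ≤ m₂ < m₁; (2) fract(v)(j₁) = fract(v)(j₂) iff m₁ = m₂; (3) fract(v)(j₁) > 0 iff m₁ ≠ i; (4) fract(v)(j₁) = 0 iff m₁ = i. -/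
open scoped BigOperators

namespace PTApaper


theorem fract_add_cases (a c : ℝ) (ha : 0 ≤ a ∧ a < 1) (hc : 0 ≤ c ∧ c < 1) :
    (a + c < 1 ∧ Int.fract (a + c) = a + c) ∨ (1 ≤ a + c ∧ Int.fract (a + c) = a + c - 1) := by
  rcases lt_or_ge (a + c) 1 with h | h
  · exact Or.inl ⟨h, Int.fract_eq_self.2 ⟨by linarith, h⟩⟩
  · refine Or.inr ⟨h, ?_⟩
    rw [← Int.fract_sub_one]
    exact Int.fract_eq_self.2 ⟨by linarith, by linarith⟩

/-- Lemma `densetest`. Let `η = p₀,…,p_n` be a pattern of a valuation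
`v` and assume `0¹ ∈ p_i`. Then for all positions `m₁, m₂` and clocks `j₁, j₂ ∈ K⁺` with
`j₁¹ ∈ p_{m₁}` and `j₂¹ ∈ p_{m₂}`:
(1) `fract(v)(j₁) > fract(v)(j₂)` iff `m₁ < i ≤ m₂`, or `m₂ < m₁ < i`, or `i ≤ m₂ < m₁`;
(2) `fract(v)(j₁) = fract(v)(j₂)` iff `m₁ = m₂`;
(3) `fract(v)(j₁) > 0` iff `m₁ ≠ i`;
(4) `fract(v)(j₁) = 0` iff `m₁ = i`. -/
theorem densetest (k : ℕ) (hk : 1 ≤ k) (v v₀ : Val k)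
    (hv : IsVal v) (hv₀ : IsVal v₀) (h0 : Initial v₀)
    (η : PatSeq k) (hη : PatternOf v₀ v η)
    (i m₁ m₂ : Fin η.length)
    (hi : ((0 : Fin (k+1)), true) ∈ η.get i)
    (j₁ j₂ : Fin k)
    (h₁ : (j₁.succ, true) ∈ η.get m₁) (h₂ : (j₂.succ, true) ∈ η.get m₂) :
    (Int.fract (v j₁.succ) > Int.fract (v j₂.succ) ↔
      ((m₁ : ℕ) < i ∧ (i : ℕ) ≤ m₂) ∨ ((m₂ : ℕ) < m₁ ∧ (m₁ : ℕ) < i) ∨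
        ((i : ℕ) ≤ m₂ ∧ (m₂ : ℕ) < m₁)) ∧
    (Int.fract (v j₁.succ) = Int.fract (v j₂.succ) ↔ m₁ = m₂) ∧
    (Int.fract (v j₁.succ) > 0 ↔ m₁ ≠ i) ∧
    (Int.fract (v j₁.succ) = 0 ↔ m₁ = i) := by
  have H := hη.2
  have e12 := H m₁ m₂ true true _ _ h₁ h₂
  have e21 := (H m₂ m₁ true true _ _ h₂ h₁).2
  have e1i := H m₁ i true true _ _ h₁ hi
  have ei1 := (H i m₁ true true _ _ hi h₁).2
  have e2i := H m₂ i true true _ _ h₂ hi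
  have ei2 := (H i m₂ true true _ _ hi h₂).2
  simp only [bval, relFract, Fin.succ_ne_zero, if_true, if_false] at e12 e21 e1i ei1 e2i ei2
  have ha : 0 ≤ Int.fract (v j₁.succ) ∧ Int.fract (v j₁.succ) < 1 :=
    ⟨Int.fract_nonneg _, Int.fract_lt_one _⟩
  have hb : 0 ≤ Int.fract (v j₂.succ) ∧ Int.fract (v j₂.succ) < 1 :=
    ⟨Int.fract_nonneg _, Int.fract_lt_one _⟩
  have hc : 0 ≤ Int.fract (1 - Int.fract (v 0)) ∧ Int.fract (1 - Int.fract (v 0)) < 1 :=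
    ⟨Int.fract_nonneg _, Int.fract_lt_one _⟩
  generalize Int.fract (1 - Int.fract (v 0)) = c at *
  generalize Int.fract (v j₁.succ) = a at *
  generalize Int.fract (v j₂.succ) = b at *
  obtain ⟨e12, l12⟩ := e12
  obtain ⟨e1i, l1i⟩ := e1i
  obtain ⟨e2i, l2i⟩ := e2i
  have n2i : (i : ℕ) ≤ m₂ ↔ ¬ (m₂ : ℕ) < i := by omega
  rw [n2i, ← e21, ← l1i, ← l2i, ne_eq, ← e12, ← e1i]
  rcases fract_add_cases a c ha hc with ⟨h1, r1⟩ | ⟨h1, r1⟩ <;>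
  rcases fract_add_cases b c hb hc with ⟨h2, r2⟩ | ⟨h2, r2⟩ <;>
  rw [r1, r2] <;> clear * - ha hb hc h1 h2 <;> grind

end PTApaper
end

section
/- The function Next on patterns is injective and has no fixed point: for all patterns η, η', if Next(η) = Next(η') then η = η', and Next(η) ≠ η for every pattern η. -/
open scoped BigOperators

namespace PTApaper

theorem aux_split_unique {α : Type*} {P : α → Prop} {A A' B B' : List α} {p p' : α}
    (hA : ∀ a ∈ A, ¬ P a) (hA' : ∀ a ∈ A', ¬ P a) (hp : P p) (hp' : P p')
    (h : A ++ p :: B = A' ++ p' :: B') : A = A' ∧ p = p' ∧ B = B' := by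
  induction A generalizing A' with
  | nil =>
    cases A' with
    | nil => simpa using h
    | cons a A' =>
      simp only [List.nil_append, List.cons_append, List.cons.injEq] at h
      exact absurd (h.1 ▸ hp) (hA' a (by simp))
  | cons a A ih =>
    cases A' with
    | nil =>
      simp only [List.nil_append, List.cons_append, List.cons.injEq] at h
      exact absurd (h.1 ▸ hp') (hA a (by simp))
    | cons a' A' =>
      simp only [List.cons_append, List.cons.injEq] at h
      have := ih (A' := A') (fun x hx => hA x (by simp [hx])) (fun x hx => hA' x (by simp [hx])) h.2
      simp [h.1, this]

theorem aux_decomp {k : ℕ} (η : PatSeq k) (h : IsPattern η) :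
    ∃ A q B, η = A ++ q :: B ∧ (∀ a ∈ A, ((0 : Fin (k+1)), true) ∉ a) ∧
      ((0 : Fin (k+1)), true) ∈ q ∧ (∀ b ∈ B, ((0 : Fin (k+1)), true) ∉ b) ∧
      nowIdx η = A.length := by
  obtain ⟨-, -, hd, -, hc⟩ := h
  obtain ⟨p, hp, hz⟩ := hc ((0 : Fin (k+1)), true)
  obtain ⟨A, B, rfl⟩ := List.append_of_mem hp
  rw [List.pairwise_append, List.pairwise_cons] at hd
  have hA : ∀ a ∈ A, ((0 : Fin (k+1)), true) ∉ a := fun a ha hza =>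
    Finset.disjoint_left.1 (hd.2.2 a ha p (by simp)) hza hz
  refine ⟨A, p, B, rfl, hA, hz, fun b hb hzb =>
    Finset.disjoint_left.1 (hd.2.1.1 b hb) hz hzb, ?_⟩
  unfold nowIdx
  clear hd hc hp
  induction A with
  | nil => simp [List.findIdx_cons, hz]
  | cons a A ih =>
    have h1 := hA a (by simp)
    have h2 := ih (fun x hx => hA x (by simp [hx]))
    simp [List.findIdx_cons, h1, h2]

/-- The three shapes of a pattern and its successor. -/
theorem aux_cases {k : ℕ} (η : PatSeq k) (h : IsPattern η) :
    ∃ z : Fin (k+1) × Bool, z = (0, true) ∧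
    ((∃ A p B, η = A ++ p :: {z} :: B ∧ NextPat η = A ++ insert z p :: B ∧
        (∀ a ∈ A, z ∉ a) ∧ z ∉ p ∧ p ≠ ∅) ∨
     (∃ p B, η = insert z p :: B ∧ NextPat η = (p :: B) ++ {z} :: [] ∧
        (∀ a ∈ p :: B, z ∉ a) ∧ p ≠ ∅) ∨
     (∃ A p B, η = A ++ insert z p :: B ∧ NextPat η = A ++ {z} :: p :: B ∧
        (∀ a ∈ A, z ∉ a) ∧ z ∉ p ∧ p ≠ ∅)) := by
  refine ⟨_, rfl, ?_⟩
  obtain ⟨A, q, B, rfl, hA, hq, hB, hi⟩ := aux_decomp η h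
  obtain ⟨-, hne, hd, h0, -⟩ := h
  have hq' : insert ((0 : Fin (k+1)), true) (q \ {((0 : Fin (k+1)), true)}) = q := by
    ext x; simp; grind
  have hgq : (A ++ q :: B).getD A.length ∅ = q := by simp
  by_cases hm : q = {((0 : Fin (k+1)), true)}
  · left
    rcases List.eq_nil_or_concat A with rfl | ⟨A, p, rfl⟩
    · simp [hm] at h0
    · refine ⟨A, p, B, by simp [hm], ?_, fun a ha => hA a (by simp [ha]), hA p (by simp),
        (hne p (by simp)).ne_empty⟩
      unfold NextPat
      subst hm
      simp only [hi, hgq, if_true]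
      simp [List.drop_append, Nat.add_assoc]
  · right
    have hpne : q \ {((0 : Fin (k+1)), true)} ≠ ∅ := by
      intro he
      rw [he] at hq'
      exact hm hq'.symm
    cases A with
    | nil =>
      left
      refine ⟨q \ {((0 : Fin (k+1)), true)}, B, by simp [hq'], ?_, ?_, hpne⟩
      · unfold NextPat
        simp only [hi, hgq, if_neg hm]
        simp
      · intro a ha
        rcases List.mem_cons.1 ha with rfl | ha
        · simp
        · exact hB a ha
    | cons a A =>
      right
      refine ⟨a :: A, q \ {((0 : Fin (k+1)), true)}, B, by rw [hq'], ?_, hA, by simp, hpne⟩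
      unfold NextPat
      simp only [hi, hgq, if_neg hm]
      simp

theorem aux_ins_ne {α : Type*} [DecidableEq α] {z : α} {p : Finset α} (hz : z ∉ p)
    (hp : p ≠ ∅) : insert z p ≠ {z} := by
  intro h
  obtain ⟨x, hx⟩ := Finset.nonempty_iff_ne_empty.2 hp
  have : x ∈ ({z} : Finset α) := h ▸ Finset.mem_insert_of_mem hx
  rw [Finset.mem_singleton] at this
  exact hz (this ▸ hx)

theorem aux_ins_inj {α : Type*} [DecidableEq α] {z : α} {p q : Finset α} (hz : z ∉ p)
    (hq : z ∉ q) (h : insert z p = insert z q) : p = q := by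
  rw [← Finset.erase_insert hz, h, Finset.erase_insert hq]

/-- `Next` is injective on patterns and has no fixed point. -/
theorem next_injective_no_fixed_point (k : ℕ) (hk : 1 ≤ k) :
    (∀ η η' : PatSeq k, IsPattern η → IsPattern η' →
      NextPat η = NextPat η' → η = η') ∧
    (∀ η : PatSeq k, IsPattern η → NextPat η ≠ η) := by
  constructor
  · intro η η' h h' he
    obtain ⟨z, hz, H⟩ := aux_cases η h
    obtain ⟨z', hz', H'⟩ := aux_cases η' h'
    obtain rfl : z = z' := hz.trans hz'.symm
    clear hz hz'
    rcases H with ⟨A, p, B, e, n, hA, hp, hpe⟩ | ⟨p, B, e, n, hA, hpe⟩ | ⟨A, p, B, e, n, hA, hp, hpe⟩ <;>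
    rcases H' with ⟨A', p', B', e', n', hA', hp', hpe'⟩ | ⟨p', B', e', n', hA', hpe'⟩ |
      ⟨A', p', B', e', n', hA', hp', hpe'⟩ <;>
    rw [n, n'] at he <;>
    obtain ⟨h1, h2, h3⟩ := aux_split_unique (P := fun a => z ∈ a) hA hA' (by simp) (by simp) he
    · rw [e, e', h1, h3, aux_ins_inj hp hp' h2]
    · exact absurd h2 (aux_ins_ne hp hpe)
    · exact absurd h2 (aux_ins_ne hp hpe)
    · exact absurd h2.symm (aux_ins_ne hp' hpe')
    · simp only [List.cons.injEq] at h1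
      rw [e, e', h1.1, h1.2]
    · simp at h3
    · exact absurd h2.symm (aux_ins_ne hp' hpe')
    · simp at h3
    · simp only [List.cons.injEq] at h3
      rw [e, e', h1, h3.1, h3.2]
  · intro η h he
    obtain ⟨z, -, H⟩ := aux_cases η h
    have hl := congrArg List.length he
    rcases H with ⟨A, p, B, e, n, -⟩ | ⟨p, B, e, n, -⟩ | ⟨A, p, B, e, n, -⟩ <;>
    · rw [n, e] at hl
      simp at hl

end PTApaper
end

section
/- For every pattern η = p₀,…,p_n there is a smallest positive integer m such that Next^m(η) = η; moreover m = 2n if η is a merge-pattern and m = 2(n+1) if η is a split-pattern, and the patterns η, Next(η), …, Next^{m−1}(η) are pairwise distinct. -/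
open scoped BigOperators

namespace PTApaper

lemma ring_abstract {α : Type*} (f : α → α) (r : ℕ → α) (M : ℕ) (hM : 0 < M)
    (hf : ∀ t < M, f (r t) = r ((t+1) % M))
    (hinj : ∀ s t, s < M → t < M → r s = r t → s = t) (t0 : ℕ) (ht0 : t0 < M) :
    f^[M] (r t0) = r t0 ∧ (∀ m', 0 < m' → f^[m'] (r t0) = r t0 → M ≤ m') ∧
    (∀ a b : ℕ, a < M → b < M → f^[a] (r t0) = f^[b] (r t0) → a = b) := by
  have it : ∀ a, f^[a] (r t0) = r ((t0 + a) % M) := by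
    intro a
    induction a with
    | zero => simp [Nat.mod_eq_of_lt ht0]
    | succ a ih =>
      rw [Function.iterate_succ_apply', ih, hf _ (Nat.mod_lt _ hM)]
      congr 1
      rw [Nat.mod_add_mod]; rfl
  have inj : ∀ a b : ℕ, a < M → b < M → f^[a] (r t0) = f^[b] (r t0) → a = b := by
    intro a b ha hb h
    rw [it, it] at h
    have h2 : (t0 + a) ≡ (t0 + b) [MOD M] := hinj _ _ (Nat.mod_lt _ hM) (Nat.mod_lt _ hM) h
    have h3 := Nat.ModEq.add_left_cancel' t0 h2
    exact Nat.ModEq.eq_of_lt_of_lt h3 ha hb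
  refine ⟨?_, ?_, inj⟩
  · rw [it]; simp [Nat.mod_eq_of_lt ht0]
  · intro m' hm h
    by_contra hlt
    have := inj m' 0 (by omega) hM (by simpa using h)
    omega

variable {k : ℕ}

lemma nowIdx_app (A B : PatSeq k) (p : Finset (Fin (k+1) × Bool))
    (hA : ∀ q ∈ A, ((0 : Fin (k+1)), true) ∉ q) (hp : ((0 : Fin (k+1)), true) ∈ p) :
    nowIdx (A ++ p :: B) = A.length := by
  induction A with
  | nil => simp [nowIdx, List.findIdx_cons, hp]
  | cons a A ih =>
    have := ih (fun q hq => hA q (by simp [hq]))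
    have ha := hA a (by simp)
    unfold nowIdx at *
    simp [List.findIdx_cons, ha, this]

lemma getD_app (A B : PatSeq k) (p : Finset (Fin (k+1) × Bool)) :
    (A ++ p :: B).getD A.length ∅ = p := by simp

lemma next_merge (A B : PatSeq k) (x : Finset (Fin (k+1) × Bool))
    (hA : ∀ q ∈ A, ((0 : Fin (k+1)), true) ∉ q) (hx : ((0 : Fin (k+1)), true) ∉ x) :
    NextPat (A ++ x :: {((0 : Fin (k+1)), true)} :: B)
      = A ++ (x ∪ {((0 : Fin (k+1)), true)}) :: B := by
  have h := nowIdx_app (A ++ [x]) B {((0 : Fin (k+1)), true)}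
    (by simpa [or_imp, forall_and, hx] using hA) (by simp)
  simp only [List.append_assoc, List.singleton_append, List.length_append,
    List.length_singleton, List.cons_append, List.nil_append] at h
  have h2 : (A ++ x :: {((0 : Fin (k+1)), true)} :: B).drop (A.length + 1 + 1) = B := by
    have e : A ++ x :: {((0 : Fin (k+1)), true)} :: B
        = (A ++ [x, {((0 : Fin (k+1)), true)}]) ++ B := by simp
    rw [e]
    exact List.drop_left' (by simp)
  simp [NextPat, h, h2]

lemma union_ne (x : Finset (Fin (k+1) × Bool)) (hx : ((0 : Fin (k+1)), true) ∉ x)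
    (hn : x.Nonempty) : x ∪ {((0 : Fin (k+1)), true)} ≠ {((0 : Fin (k+1)), true)} := by
  intro h
  obtain ⟨y, hy⟩ := hn
  have : y ∈ x ∪ {((0 : Fin (k+1)), true)} := by simp [hy]
  rw [h, Finset.mem_singleton] at this
  exact hx (this ▸ hy)

lemma union_sd (x : Finset (Fin (k+1) × Bool)) (hx : ((0 : Fin (k+1)), true) ∉ x) :
    (x ∪ {((0 : Fin (k+1)), true)}) \ {((0 : Fin (k+1)), true)} = x := by
  ext y
  simp only [Finset.mem_sdiff, Finset.mem_union, Finset.mem_singleton]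
  constructor
  · tauto
  · intro h
    exact ⟨Or.inl h, fun e => hx (e ▸ h)⟩

lemma next_split0 (B : PatSeq k) (x : Finset (Fin (k+1) × Bool))
    (hx : ((0 : Fin (k+1)), true) ∉ x) (hn : x.Nonempty) :
    NextPat ((x ∪ {((0 : Fin (k+1)), true)}) :: B) = x :: B ++ [{((0 : Fin (k+1)), true)}] := by
  have h := nowIdx_app [] B (x ∪ {((0 : Fin (k+1)), true)}) (by simp) (by simp)
  simp only [List.nil_append, List.length_nil] at h
  have h1 := union_ne x hx hn
  have h2 := union_sd x hx
  simp only [NextPat, h, List.getD_cons_zero, if_neg h1, h2]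
  simp

lemma next_split (A B : PatSeq k) (x : Finset (Fin (k+1) × Bool)) (hA0 : A ≠ [])
    (hA : ∀ q ∈ A, ((0 : Fin (k+1)), true) ∉ q)
    (hx : ((0 : Fin (k+1)), true) ∉ x) (hn : x.Nonempty) :
    NextPat (A ++ (x ∪ {((0 : Fin (k+1)), true)}) :: B)
      = A ++ {((0 : Fin (k+1)), true)} :: x :: B := by
  have h := nowIdx_app A B (x ∪ {((0 : Fin (k+1)), true)}) hA (by simp)
  have h1 := union_ne x hx hn
  have h2 := union_sd x hx
  have h3 : A.length ≠ 0 := by simpa using hA0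
  simp only [NextPat, h, getD_app, if_neg h1, if_neg h3, h2]
  simp [List.drop_append]

/-- ring element: even index `2j` inserts `0¹` into `c_j`, odd `2j+1` puts it just after. -/
def ringEl (c : PatSeq k) (t : ℕ) : PatSeq k :=
  if t % 2 = 0 then
    c.take (t/2) ++ (c.getD (t/2) ∅ ∪ {((0 : Fin (k+1)), true)}) :: c.drop (t/2+1)
  else c.take (t/2+1) ++ {((0 : Fin (k+1)), true)} :: c.drop (t/2+1)

lemma ringEl_even (c : PatSeq k) (j : ℕ) : ringEl c (2*j) =
    c.take j ++ (c.getD j ∅ ∪ {((0 : Fin (k+1)), true)}) :: c.drop (j+1) := by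
  simp [ringEl]

lemma ringEl_odd (c : PatSeq k) (j : ℕ) : ringEl c (2*j+1) =
    c.take (j+1) ++ {((0 : Fin (k+1)), true)} :: c.drop (j+1) := by
  have h1 : (2*j+1) % 2 = 1 := by omega
  have h2 : (2*j+1) / 2 = j := by omega
  simp [ringEl, h1, h2]

/-- good base list -/
def Good (c : PatSeq k) : Prop := ∀ q ∈ c, ((0 : Fin (k+1)), true) ∉ q ∧ q.Nonempty

lemma good_next_odd (c : PatSeq k) (hc : Good c) (j : ℕ) (hj : j < c.length) :
    NextPat (ringEl c (2*j+1)) = ringEl c (2*j) := by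
  rw [ringEl_even, ringEl_odd]
  have e : c.take (j+1) = c.take j ++ [c.getD j ∅] := by
    rw [List.getD_eq_getElem _ _ hj, List.take_append_getElem]
  rw [e]
  have := next_merge (c.take j) (c.drop (j+1)) (c.getD j ∅)
    (fun q hq => (hc q (List.mem_of_mem_take hq)).1)
    (by rw [List.getD_eq_getElem _ _ hj]; exact (hc _ (List.getElem_mem hj)).1)
  simpa using this

lemma good_next_even (c : PatSeq k) (hc : Good c) (j : ℕ) (hj : j + 1 < c.length) :
    NextPat (ringEl c (2*(j+1))) = ringEl c (2*j+1) := by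
  rw [ringEl_even, ringEl_odd]
  have hg := hc _ (List.getElem_mem hj)
  have hne : c.take (j+1) ≠ [] := by
    intro h
    have := congrArg List.length h
    simp at this
    simp [this] at hj
  rw [next_split (c.take (j+1)) _ _ hne (fun q hq => (hc q (List.mem_of_mem_take hq)).1)
    (by rw [List.getD_eq_getElem _ _ hj]; exact hg.1)
    (by rw [List.getD_eq_getElem _ _ hj]; exact hg.2)]
  rw [List.getD_eq_getElem _ _ hj, List.drop_eq_getElem_cons hj]

lemma good_next_zero (c : PatSeq k) (hc : Good c) (h0 : 0 < c.length) :
    NextPat (ringEl c 0) = ringEl c (2*(c.length-1)+1) := by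
  have e := ringEl_even c 0
  simp only [Nat.mul_zero] at e
  rw [e, ringEl_odd]
  cases c with
  | nil => simp at h0
  | cons x B =>
    have hg := hc x (by simp)
    have := next_split0 B x hg.1 hg.2
    simpa using this

lemma ringEl_now (c : PatSeq k) (hc : Good c) (t : ℕ) (ht : t < 2 * c.length) :
    nowIdx (ringEl c t) = (t+1)/2 ∧ (ringEl c t).length = c.length + t % 2 := by
  rcases Nat.even_or_odd' t with ⟨j, rfl | rfl⟩
  · rw [ringEl_even, nowIdx_app _ _ _ (fun q hq => (hc q (List.mem_of_mem_take hq)).1) (by simp)]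
    simp
    omega
  · rw [ringEl_odd, nowIdx_app _ _ _ (fun q hq => (hc q (List.mem_of_mem_take hq)).1) (by simp)]
    simp
    omega

lemma ringEl_merge (c : PatSeq k) (hc : Good c) (t : ℕ) (ht : t < 2 * c.length) :
    IsMergePat (ringEl c t) ↔ t % 2 = 1 := by
  have hA : ∀ i, ∀ q ∈ c.take i, ((0 : Fin (k+1)), true) ∉ q :=
    fun i q hq => (hc q (List.mem_of_mem_take hq)).1
  unfold IsMergePat
  rcases Nat.even_or_odd' t with ⟨j, rfl | rfl⟩
  · have hj : j < c.length := by omega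
    have hg := hc _ (List.getElem_mem hj)
    rw [ringEl_even, nowIdx_app _ _ _ (hA _) (by simp), getD_app, List.getD_eq_getElem _ _ hj]
    simp only [union_ne _ hg.1 hg.2, false_iff]
    omega
  · rw [ringEl_odd, nowIdx_app _ _ _ (hA _) (by simp), getD_app]
    simp

lemma exists_ring (η : PatSeq k) (hη : IsPattern η) :
    ∃ c : PatSeq k, Good c ∧ ∃ t, t < 2 * c.length ∧ η = ringEl c t := by
  obtain ⟨-, hne, hd, h0, hall⟩ := hη
  obtain ⟨p, hp, hz⟩ := hall ((0 : Fin (k+1)), true)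
  obtain ⟨A, B, rfl⟩ := List.append_of_mem hp
  rw [List.pairwise_append, List.pairwise_cons] at hd
  obtain ⟨-, ⟨hB, -⟩, hA⟩ := hd
  have hA' : ∀ q ∈ A, ((0 : Fin (k+1)), true) ∉ q ∧ q.Nonempty := fun q hq =>
    ⟨fun h => Finset.disjoint_left.1 (hA q hq p (by simp)) h hz, hne q (by simp [hq])⟩
  have hB' : ∀ q ∈ B, ((0 : Fin (k+1)), true) ∉ q ∧ q.Nonempty := fun q hq =>
    ⟨fun h => Finset.disjoint_left.1 (hB q hq) hz h, hne q (by simp [hq])⟩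
  by_cases hpz : p = {((0 : Fin (k+1)), true)}
  · subst hpz
    have hA0 : A ≠ [] := by
      rintro rfl
      simp at h0
    have hl : A.length ≠ 0 := by simpa using hA0
    refine ⟨A ++ B, ?_, 2 * (A.length - 1) + 1, ?_, ?_⟩
    · intro q hq
      rcases List.mem_append.1 hq with h | h
      · exact hA' q h
      · exact hB' q h
    · simp; omega
    · rw [ringEl_odd, Nat.sub_add_cancel (by omega)]
      simp
  · have hx : (p \ {((0 : Fin (k+1)), true)}) ∪ {((0 : Fin (k+1)), true)} = p := by
      apply Finset.sdiff_union_of_subset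
      simpa using hz
    refine ⟨A ++ (p \ {((0 : Fin (k+1)), true)}) :: B, ?_, 2 * A.length, ?_, ?_⟩
    · intro q hq
      rcases List.mem_append.1 hq with h | h
      · exact hA' q h
      · rcases List.mem_cons.1 h with h | h
        · subst h
          refine ⟨by simp, ?_⟩
          rw [Finset.nonempty_iff_ne_empty]
          intro h
          rw [h, Finset.empty_union] at hx
          exact hpz hx.symm
        · exact hB' q h
    · simp
    · rw [ringEl_even, getD_app, hx]
      simp [List.drop_append]

/-- For every pattern `η = p₀,…,p_n` there is a smallest positive `m`
with `Next^m(η) = η`; moreover `m = 2n` if `η` is a merge-pattern and `m = 2(n+1)` if `η`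
is a split-pattern, and `η, Next(η), …, Next^{m-1}(η)` are pairwise distinct. -/
theorem pattern_ring (k : ℕ) (hk : 1 ≤ k) (η : PatSeq k) (hη : IsPattern η) :
    ∃ m : ℕ, 0 < m ∧ NextPat^[m] η = η ∧
      (∀ m' : ℕ, 0 < m' → NextPat^[m'] η = η → m ≤ m') ∧
      (IsMergePat η → m = 2 * (η.length - 1)) ∧
      (IsSplitPat η → m = 2 * η.length) ∧
      (∀ a b : ℕ, a < m → b < m → NextPat^[a] η = NextPat^[b] η → a = b) := by
  obtain ⟨c, hc, t, ht, rfl⟩ := exists_ring η hη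
  have hlen : 0 < c.length := by omega
  obtain ⟨h1, h2, h3⟩ := ring_abstract (NextPat (k := k))
    (fun s => ringEl c (2 * c.length - 1 - s)) (2 * c.length) (by omega)
    (by
      intro s hs
      by_cases hl : s + 1 = 2 * c.length
      · have e : 2 * c.length - 1 - s = 0 := by omega
        have e' : 2 * c.length - 1 - 0 = 2 * (c.length - 1) + 1 := by omega
        simp only [hl, Nat.mod_self, e, e']
        exact good_next_zero c hc hlen
      · rw [Nat.mod_eq_of_lt (by omega)]
        rcases Nat.even_or_odd' (2 * c.length - 1 - (s+1)) with ⟨j, hj | hj⟩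
        · have e : 2 * c.length - 1 - s = 2 * j + 1 := by omega
          rw [hj, e]
          exact good_next_odd c hc j (by omega)
        · have e : 2 * c.length - 1 - s = 2 * (j + 1) := by omega
          rw [hj, e]
          exact good_next_even c hc j (by omega))
    (by
      intro a b ha hb h
      have x := ringEl_now c hc (2 * c.length - 1 - a) (by omega)
      have y := ringEl_now c hc (2 * c.length - 1 - b) (by omega)
      rw [h] at x
      omega)
    (2 * c.length - 1 - t) (by omega)
  have e : 2 * c.length - 1 - (2 * c.length - 1 - t) = t := by omega
  simp only [e] at h1 h2 h3
  have hm := ringEl_merge c hc t ht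
  have hn := (ringEl_now c hc t ht).2
  refine ⟨2 * c.length, by omega, h1, h2, ?_, ?_, h3⟩
  · intro h
    have := hm.1 h
    omega
  · intro h
    have : ¬ t % 2 = 1 := fun h' => h (hm.2 h')
    omega

end PTApaper
end

section
/- Let η be a pattern and m the length of its pattern ring, i.e., the smallest positive integer with Next^m(η) = η. Then for every discrete valuation u : K → ℕ, the m-fold iterate of next satisfies next^m(η,u) = (η, u + 1), where (u+1)(i) = u(i)+1 for every i ∈ K. -/
open scoped BigOperators

namespace PTApaper

/-- The index `0¹`. -/
abbrev zz (k : ℕ) : Fin (k+1) × Bool := (0, true)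

lemma nowIdx_append {k : ℕ} (A B : PatSeq k) (p : Finset (Fin (k+1) × Bool))
    (hA : ∀ a ∈ A, zz k ∉ a) (hp : zz k ∈ p) : nowIdx (A ++ p :: B) = A.length := by
  unfold nowIdx
  induction A with
  | nil => simp [List.findIdx_cons, hp]
  | cons a A ih =>
    have h1 : ((0 : Fin (k+1)), true) ∉ a := hA a (by simp)
    have h2 := ih (fun b hb => hA b (by simp [hb]))
    simp [List.findIdx_cons, h1, h2]

/-- Ring of patterns with base `q`. -/
def pat {k : ℕ} (q : PatSeq k) (s : ℕ) : PatSeq k :=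
  if s % 2 = 0 then q.take (s/2) ++ (q.getD (s/2) ∅ ∪ {zz k}) :: q.drop (s/2+1)
  else q.take (s/2+1) ++ {zz k} :: q.drop (s/2+1)

/-- increment -/
def inc {k : ℕ} (q : PatSeq k) (s : ℕ) (j : Fin (k+1)) : ℕ :=
  if s % 2 = 0 then 0
  else if j = 0 then (if s / 2 = 0 then 1 else 0)
  else if (j, true) ∈ q.getD (s/2) ∅ then 1 else 0

structure Base {k : ℕ} (q : PatSeq k) : Prop where
  ne : ∀ p ∈ q, p.Nonempty
  nz : ∀ p ∈ q, zz k ∉ p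

lemma drop_add {k : ℕ} (A T : PatSeq k) (n : ℕ) :
    (A ++ T).drop (A.length + n) = T.drop n := by
  induction A with
  | nil => simp
  | cons a A ih => rw [List.length_cons, Nat.add_right_comm]; simpa using ih

lemma nextMerge {k : ℕ} (A B : PatSeq k) (p : Finset (Fin (k+1) × Bool)) (u : DVal k)
    (hA : ∀ a ∈ A, zz k ∉ a) (hp : zz k ∉ p) :
    NextPat (A ++ p :: {zz k} :: B) = A ++ (p ∪ {zz k}) :: B ∧
    nextD (A ++ p :: {zz k} :: B) u = fun j => u j + (if j = 0 then (if A.length = 0 then 1 else 0)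
      else if (j, true) ∈ p then 1 else 0) := by
  have h := nowIdx_append (A ++ [p]) B {zz k} (by simpa [or_imp, forall_and, hp] using hA) (by simp)
  simp only [List.append_assoc, List.singleton_append, List.length_append, List.length_singleton] at h
  constructor
  · unfold NextPat
    simp [h, add_assoc, drop_add]
  · unfold nextD
    funext j
    simp only [h]
    by_cases hj : j = 0
    · subst hj; by_cases hl : A = [] <;> simp [hl]
    · by_cases hl : (j, true) ∈ p <;> simp [hj, hl]

lemma nextSplit {k : ℕ} (A B : PatSeq k) (p : Finset (Fin (k+1) × Bool)) (u : DVal k)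
    (hA : ∀ a ∈ A, zz k ∉ a) (hp : zz k ∉ p) (hne : p.Nonempty) :
    NextPat (A ++ (p ∪ {zz k}) :: B) = (if A = [] then p :: (B ++ [{zz k}])
      else A ++ {zz k} :: p :: B) ∧
    nextD (A ++ (p ∪ {zz k}) :: B) u = u := by
  have h := nowIdx_append A B (p ∪ {zz k}) hA (by simp)
  have h2 : ¬ (p ∪ {zz k} = {zz k}) := by
    intro e
    obtain ⟨x, hx⟩ := hne
    have : x ∈ ({zz k} : Finset _) := e ▸ (by simp [hx])
    simp at this
    subst this; exact hp hx
  have h3 : (p ∪ {zz k}) \ {zz k} = p := by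
    ext x; simp; constructor
    · rintro ⟨h | h, h'⟩ <;> simp_all
    · intro hx; exact ⟨Or.inr hx, fun e => hp (e ▸ hx)⟩
  generalize p ∪ {zz k} = P at *
  constructor
  · unfold NextPat
    by_cases hl : A = []
    · subst hl; simp at h; simp only [List.nil_append, h]; simp [h2, h3]
    · simp [h, h2, hl, h3, drop_add]
  · unfold nextD
    simp [h, h2]

lemma take_snoc {k : ℕ} (q : PatSeq k) (i : ℕ) (h : i < q.length) (T : PatSeq k) :
    q.take (i+1) ++ T = q.take i ++ q.getD i ∅ :: T := by
  have : q.take (i+1) = q.take i ++ [q.getD i ∅] := by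
    rw [List.take_add_one]; simp [h]
  rw [this]; simp

lemma pat_even {k : ℕ} (q : PatSeq k) (i : ℕ) :
    pat q (2*i) = q.take i ++ (q.getD i ∅ ∪ {zz k}) :: q.drop (i+1) := by
  simp [pat]

lemma pat_odd {k : ℕ} (q : PatSeq k) (i : ℕ) :
    pat q (2*i+1) = q.take (i+1) ++ {zz k} :: q.drop (i+1) := by
  have h1 : (2*i+1) % 2 = 1 := by omega
  have h2 : (2*i+1) / 2 = i := by omega
  simp [pat, h1, h2]

lemma inc_even {k : ℕ} (q : PatSeq k) (i : ℕ) (j) : inc q (2*i) j = 0 := by simp [inc]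

lemma inc_odd {k : ℕ} (q : PatSeq k) (i : ℕ) (j) : inc q (2*i+1) j =
    if j = 0 then (if i = 0 then 1 else 0) else if (j, true) ∈ q.getD i ∅ then 1 else 0 := by
  have h1 : (2*i+1) % 2 = 1 := by omega
  have h2 : (2*i+1) / 2 = i := by omega
  simp [inc, h1, h2]

lemma Base.getD {k : ℕ} {q : PatSeq k} (hq : Base q) {i : ℕ} (h : i < q.length) :
    zz k ∉ q.getD i ∅ ∧ (q.getD i ∅).Nonempty := by
  have : q.getD i ∅ ∈ q := by simp [h]
  exact ⟨hq.nz _ this, hq.ne _ this⟩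

lemma Base.take {k : ℕ} {q : PatSeq k} (hq : Base q) (i : ℕ) :
    ∀ a ∈ q.take i, zz k ∉ a := fun a ha => hq.nz a (List.mem_of_mem_take ha)

lemma next_pos {k : ℕ} {q : PatSeq k} (hq : Base q) (s : ℕ) (hs : s + 1 < 2 * q.length)
    (u : DVal k) :
    nextPair (pat q (s+1)) u = (pat q s, fun j => u j + inc q (s+1) j) := by
  unfold nextPair
  rcases Nat.even_or_odd' s with ⟨i, rfl | rfl⟩
  · have hi : i < q.length := by omega
    have := nextMerge (q.take i) (q.drop (i+1)) (q.getD i ∅) u (hq.take i) (hq.getD hi).1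
    rw [pat_odd, take_snoc _ _ hi, pat_even, this.1, this.2]
    have e : (q.take i).length = i := by simp; omega
    simp only [e, inc_odd]
  · have hi : i + 1 < q.length := by omega
    have := nextSplit (q.take (i+1)) (q.drop (i+1+1)) (q.getD (i+1) ∅) u (hq.take _)
      (hq.getD hi).1 (hq.getD hi).2
    have e : ¬ (q.take (i+1) = []) := by
      intro e; have := congrArg List.length e; simp at this; subst this; simp at hi
    rw [show 2*i+1+1 = 2*(i+1) by ring, pat_even, pat_odd, this.1, this.2, if_neg e]
    simp only [inc_even, add_zero]
    rw [List.drop_eq_getElem_cons hi]; simp [hi]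

lemma next_zero {k : ℕ} {q : PatSeq k} (hq : Base q) (hs : 0 < q.length)
    (u : DVal k) :
    nextPair (pat q 0) u = (pat q (2 * q.length - 1), u) := by
  unfold nextPair
  have := nextSplit (q.take 0) (q.drop (0+1)) (q.getD 0 ∅) u (hq.take _)
      (hq.getD hs).1 (hq.getD hs).2
  rw [show 2 * q.length - 1 = 2 * (q.length - 1) + 1 by omega, show pat q 0 = pat q (2*0) from rfl,
    pat_even, pat_odd, this.1, this.2]
  have e : q.length - 1 + 1 = q.length := by omega
  rw [e]
  cases q with
  | nil => simp at hs
  | cons a q => simp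

abbrev nx {k : ℕ} : PatSeq k × DVal k → PatSeq k × DVal k := fun p => nextPair p.1 p.2

lemma nx_fst {k : ℕ} (n : ℕ) (p : PatSeq k × DVal k) : (nx^[n] p).1 = NextPat^[n] p.1 := by
  induction n generalizing p with
  | zero => rfl
  | succ n ih => rw [Function.iterate_succ_apply, ih, Function.iterate_succ_apply]; rfl

lemma nx_down {k : ℕ} {q : PatSeq k} (hq : Base q) (n s : ℕ) (hs : s + n < 2 * q.length)
    (u : DVal k) :
    nx^[n] (pat q (s+n), u) = (pat q s, fun j => u j + ∑ t ∈ Finset.Ico (s+1) (s+n+1), inc q t j) := by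
  induction n generalizing u with
  | zero => simp
  | succ n ih =>
    rw [Function.iterate_succ_apply]
    have : nx (pat q (s+(n+1)), u) = (pat q (s+n), fun j => u j + inc q (s+n+1) j) :=
      next_pos hq (s+n) hs u
    rw [this, ih (Nat.lt_of_succ_lt hs)]
    congr 1
    funext j
    have e := Finset.sum_Ico_succ_top (show s+1 ≤ s+n+1 by omega) (fun t => inc q t j)
    rw [show s + (n+1) + 1 = s+n+1+1 from rfl, e]
    ring

lemma nx_wrap {k : ℕ} {q : PatSeq k} (hq : Base q) (s n r : ℕ) (hs : s < 2 * q.length)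
    (hr : r + n + 1 = 2 * q.length) (u : DVal k) :
    nx^[n + 1 + s] (pat q s, u) = (pat q r, fun j => u j + ∑ t ∈ Finset.Ico 1 (s+1), inc q t j
      + ∑ t ∈ Finset.Ico (r+1) (2 * q.length), inc q t j) := by
  have h1 := nx_down hq s 0 (by omega) u
  simp only [zero_add] at h1
  rw [Function.iterate_add_apply, h1, Function.iterate_succ_apply]
  have h2 : ∀ v, nx (pat q 0, v) = (pat q (2 * q.length - 1), v) := 
    fun v => next_zero hq (by omega) v
  rw [h2, show 2 * q.length - 1 = r + n by omega, nx_down hq n r (by omega), hr]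

lemma pat_inj {k : ℕ} {q : PatSeq k} (hq : Base q) (s t : ℕ) (hs : s < 2 * q.length)
    (ht : t < 2 * q.length) (h : pat q s = pat q t) : s = t := by
  have key : ∀ s, s < 2 * q.length → nowIdx (pat q s) = s / 2 + s % 2 ∧
      (pat q s).length = q.length + s % 2 := by
    intro s hs
    rcases Nat.even_or_odd' s with ⟨i, rfl | rfl⟩
    · rw [pat_even, nowIdx_append _ _ _ (hq.take _) (by simp)]
      simp; omega
    · rw [pat_odd, nowIdx_append _ _ _ (hq.take _) (by simp)]
      simp; omega
  have h1 := key s hs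
  have h2 := key t ht
  rw [h] at h1
  omega

lemma sum_inc {k : ℕ} {q : PatSeq k} (hl : 0 < q.length) (hd : q.Pairwise Disjoint)
    (hc : ∀ j : Fin (k+1), j ≠ 0 → ∃ p ∈ q, (j, true) ∈ p) (j : Fin (k+1)) :
    ∑ t ∈ Finset.Ico 1 (2 * q.length), inc q t j = 1 := by
  by_cases hj : j = 0
  · rw [Finset.sum_eq_single 1]
    · simp [inc, hj]
    · intro b _ hb
      rcases Nat.even_or_odd' b with ⟨i, rfl | rfl⟩
      · exact inc_even _ _ _
      · rw [inc_odd]; simp [hj]; omega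
    · simp; omega
  · obtain ⟨p, hp, hjp⟩ := hc j hj
    obtain ⟨i, hi, rfl⟩ := List.mem_iff_getElem.1 hp
    rw [Finset.sum_eq_single (2*i+1)]
    · rw [inc_odd]; simp [hj, hi, hjp]
    · intro b hb hbi
      rcases Nat.even_or_odd' b with ⟨i', rfl | rfl⟩
      · exact inc_even _ _ _
      · rw [inc_odd]
        simp only [Finset.mem_Ico] at hb
        have hi' : i' < q.length := by omega
        have hjn : (j, true) ∉ q[i'] := by
          intro hm
          have hdd : Disjoint q[i] q[i'] := by
            rcases lt_or_gt_of_ne (show i ≠ i' by omega) with h | h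
            · exact List.pairwise_iff_getElem.1 hd _ _ hi hi' h
            · exact (List.pairwise_iff_getElem.1 hd _ _ hi' hi h).symm
          exact Finset.disjoint_left.1 hdd hjp hm
        simp [hj, hi', hjn]
    · simp; omega

lemma exists_base {k : ℕ} (η : PatSeq k) (hη : IsPattern η) :
    ∃ q : PatSeq k, ∃ s, Base q ∧ s < 2 * q.length ∧ q.Pairwise Disjoint ∧
      (∀ j : Fin (k+1), j ≠ 0 → ∃ p ∈ q, (j, true) ∈ p) ∧ η = pat q s := by
  obtain ⟨-, hne, hd, h0, hc⟩ := hη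
  obtain ⟨p, hp, hz⟩ := hc (zz k)
  obtain ⟨A, B, rfl⟩ := List.append_of_mem hp
  have hd' := hd
  rw [List.pairwise_append, List.pairwise_cons] at hd
  obtain ⟨dA, ⟨dpB, dB⟩, dAB⟩ := hd
  have hA : ∀ a ∈ A, zz k ∉ a := fun a ha h =>
    Finset.disjoint_left.1 (dAB a ha p (by simp)) h hz
  have hB : ∀ a ∈ B, zz k ∉ a := fun a ha h =>
    Finset.disjoint_left.1 (dpB a ha) hz h
  by_cases hs : p = {zz k}
  · subst hs
    rcases List.eq_nil_or_concat A with rfl | ⟨A', a, rfl⟩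
    · simp at h0
    · refine ⟨A' ++ [a] ++ B, 2 * A'.length + 1, ⟨?_, ?_⟩, ?_, ?_, ?_, ?_⟩
      · intro p hp; apply hne; simp at hp ⊢; tauto
      · intro p hp; rcases List.mem_append.1 hp with h | h
        · exact hA _ (by simpa using h)
        · exact hB _ h
      · simp; omega
      · refine hd'.sublist ?_
        simp
      · intro j hj
        obtain ⟨p, hp, hjp⟩ := hc (j, true)
        refine ⟨p, ?_, hjp⟩
        simp at hp ⊢
        rcases hp with h | h | h | h
        · tauto
        · tauto
        · subst h; simp at hjp; tauto
        · tauto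
      · rw [pat_odd]
        have e : A'.length + 1 = (A' ++ [a]).length := by simp
        rw [e, List.take_left, List.drop_left]; simp
  · have hpz : p \ {zz k} ∪ {zz k} = p := by
      ext x; by_cases hx : x = zz k
      · subst hx; simpa using hz
      · simp only [Finset.mem_union, Finset.mem_sdiff, Finset.mem_singleton]; tauto
    refine ⟨A ++ (p \ {zz k}) :: B, 2 * A.length, ⟨?_, ?_⟩, ?_, ?_, ?_, ?_⟩
    · intro r hr
      simp only [List.mem_append, List.mem_cons] at hr
      rcases hr with h | h | h
      · exact hne _ (by simp [h])
      · subst h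
        rw [Finset.nonempty_iff_ne_empty]
        intro e; rw [e] at hpz; exact hs (by simpa using hpz.symm)
      · exact hne _ (by simp [h])
    · intro r hr
      simp only [List.mem_append, List.mem_cons] at hr
      rcases hr with h | h | h
      · exact hA _ h
      · subst h; simp
      · exact hB _ h
    · simp
    · rw [List.pairwise_append, List.pairwise_cons]
      refine ⟨dA, ⟨fun b hb => (dpB b hb).mono_left Finset.sdiff_subset, dB⟩, ?_⟩
      intro a ha b hb
      rcases List.mem_cons.1 hb with rfl | h
      · exact (dAB a ha p (by simp)).mono_right Finset.sdiff_subset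
      · exact dAB a ha b (by simp [h])
    · intro j hj
      obtain ⟨r, hr, hjr⟩ := hc (j, true)
      simp only [List.mem_append, List.mem_cons] at hr
      rcases hr with h | h | h
      · exact ⟨r, by simp [h], hjr⟩
      · subst h; exact ⟨r \ {zz k}, by simp, by simp [hjr, hj]⟩
      · exact ⟨r, by simp [h], hjr⟩
    · rw [pat_even]
      have : (A ++ (p \ {zz k}) :: B).getD A.length ∅ = p \ {zz k} := by simp
      rw [this, hpz]
      simp [List.drop_append]

/-- Let `m` be the length of the pattern ring of `η` (the smallest
positive integer with `Next^m(η) = η`). Then for every discrete valuation `u`,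
`next^m(η,u) = (η, u + 1)`. -/
theorem next_iterate_ring (k : ℕ) (hk : 1 ≤ k) (η : PatSeq k) (hη : IsPattern η)
    (m : ℕ) (hm : 0 < m) (hring : NextPat^[m] η = η)
    (hmin : ∀ m' : ℕ, 0 < m' → NextPat^[m'] η = η → m ≤ m')
    (u : DVal k) :
    (fun p : PatSeq k × DVal k => nextPair p.1 p.2)^[m] (η, u)
      = (η, fun i => u i + 1) := by
  obtain ⟨q, s, hq, hs, hd, hc, rfl⟩ := exists_base η hη
  have full : nx^[2 * q.length] (pat q s, u) = (pat q s, fun i => u i + 1) := by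
    have h := nx_wrap hq s (2 * q.length - 1 - s) s hs (by omega) u
    rw [show 2 * q.length - 1 - s + 1 + s = 2 * q.length by omega] at h
    rw [h]
    congr 1
    funext j
    rw [add_assoc, Finset.sum_Ico_consecutive _ (by omega) (by omega),
      sum_inc (by omega) hd hc]
  have hle : m ≤ 2 * q.length := hmin _ (by omega) (by rw [← nx_fst _ (pat q s, u), full])
  have hm2 : m = 2 * q.length := by
    by_contra hne
    rw [← nx_fst _ (pat q s, u)] at hring
    rcases Nat.lt_or_ge s m with h | h
    · have h' := nx_wrap hq s (m - 1 - s) (2 * q.length - (m - s)) hs (by omega) u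
      rw [show m - 1 - s + 1 + s = m by omega] at h'
      rw [h'] at hring
      have := pat_inj hq _ _ (by omega) hs hring
      omega
    · have h' := nx_down hq m (s - m) (by omega) u
      rw [show s - m + m = s by omega] at h'
      rw [h'] at hring
      have := pat_inj hq _ _ (by omega) hs hring
      omega
  rw [hm2]
  exact full

end PTApaper
end
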